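/- For every d, n ≥ 1, ρ ∈ (0,1), and every f ∈ ℓ¹(K_n), the function F := I_n(f) satisfies Ē_ρ(F) := ½ Σ_{b∈(Z^d)^*} E_ρ[(π_b F)²] ≤ 8 d n · χ(ρ)^n · |||F|||_n². -/

import Mathlib

/-!
The Dirichlet form is bounded term by term, without using orthogonality of the monomials `η̄_Y`.
Put `u_{b,Y} = π_b η̄_Y`. By linearity `π_b F = ∑_Y f(Y) u_{b,Y}`, so the Cauchy–Schwarz inequality
with weights `|f(Y)|` gives, pointwise in `η`,
`(π_b F)² ≤ ‖f‖₁ ∑_Y |f(Y)| u_{b,Y}²` (`sq_tsum_mul_le`).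
Integrating and summing over the bonds leaves, for each fixed `Y`, the sum `∑_b E_ρ[u_{b,Y}²]`.
Here `u_{b,Y} = 0` unless `b` meets `Y`, which happens for at most `2dn` bonds, and otherwise
`E_ρ[u_{b,Y}²] ≤ 2 E_ρ[η̄_{Y^b}²] + 2 E_ρ[η̄_Y²] = 4 χ(ρ)ⁿ`, because exchanging two coordinates turns
`η̄_Y` into `η̄_{Y^b}` and `E_ρ[η̄_Z²] = χ(ρ)^{|Z|}` for every finite `Z` (`lintegral_etaBar_sq`).
Altogether `Ē_ρ(F) ≤ ½ · 2dn · 4χ(ρ)ⁿ ‖f‖₁² = 4dn χ(ρ)ⁿ ‖f‖₁²`, half of the claimed bound.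
-/


open MeasureTheory Filter
open scoped ENNReal NNReal

noncomputable section

abbrev Zd (d : ℕ) := Fin d → ℤ
abbrev Config (d : ℕ) := Zd d → Bool

def stdBasis (d : ℕ) (i : Fin d) : Zd d := fun j => if j = i then 1 else 0

def box (d : ℕ) (L : ℕ) : Finset (Zd d) :=
  Fintype.piFinset fun _ => Finset.Icc (-(L : ℤ)) (L : ℤ)

/-- `P` is the product Bernoulli(ρ) measure on `X = {0,1}^{ℤ^d}`: it is a probability
measure under which the coordinates are i.i.d. Bernoulli(ρ). -/
def IsBernoulliProduct {d : ℕ} (ρ : ℝ) (P : Measure (Config d)) : Prop :=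
  IsProbabilityMeasure P ∧
    ∀ (S : Finset (Zd d)) (b : Zd d → Bool),
      P {η | ∀ x ∈ S, η x = b x} = ∏ x ∈ S, ENNReal.ofReal (if b x then ρ else 1 - ρ)

/-- The configuration `η^{x,y}` with the occupation values at `x` and `y` exchanged. -/
def exchange {d : ℕ} (x y : Zd d) (η : Config d) : Config d :=
  fun z => if z = x then η y else if z = y then η x else η z

/-- The Kawasaki operator `π_{x,y} F (η) = F (η^{x,y}) - F η`. -/
def kawasaki {d : ℕ} (x y : Zd d) (F : Config d → ℝ) (η : Config d) : ℝ :=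
  F (exchange x y η) - F η

/-- `F` depends only on the coordinates in `Λ`. -/
def localOn {d : ℕ} (F : Config d → ℝ) (Λ : Finset (Zd d)) : Prop :=
  ∀ η η' : Config d, (∀ x ∈ Λ, η x = η' x) → F η = F η'

/-- The configuration agreeing with `η` off `Y`, and on `Y` equal to `1` on `S` and `0`
on `Y \ S`. -/
def setOn {d : ℕ} (Y S : Finset (Zd d)) (η : Config d) : Config d :=
  fun z => if z ∈ Y then decide (z ∈ S) else η z

/-- The iterated Glauber derivative `D_Y F = ∏_{x ∈ Y} D_x F`, where
`D_x F (η) = F (η^x_+) - F (η^x_-)`; explicitly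
`D_Y F (η) = ∑_{S ⊆ Y} (-1)^{|Y| - |S|} F (η with coordinates in S set to 1 and in Y∖S set to 0)`. -/
def glauber {d : ℕ} (Y : Finset (Zd d)) (F : Config d → ℝ) (η : Config d) : ℝ :=
  ∑ S ∈ Y.powerset, (-1 : ℝ) ^ (Y.card - S.card) * F (setOn Y S η)

/-- `η̄_Y = ∏_{x ∈ Y} (η_x - ρ)`. -/
def etaBar {d : ℕ} (ρ : ℝ) (Y : Finset (Zd d)) (η : Config d) : ℝ :=
  ∏ x ∈ Y, ((if η x then (1 : ℝ) else 0) - ρ)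

/-- `K_n`, the collection of `n`-element subsets of `ℤ^d`. -/
abbrev Kn (d n : ℕ) := {Y : Finset (Zd d) // Y.card = n}

/-- Translation: `τ_x F (η) = F (τ_x η)` with `(τ_x η) y = η (x + y)`. -/
def transl {d : ℕ} (x : Zd d) (F : Config d → ℝ) : Config d → ℝ :=
  fun η => F fun y => η (x + y)

/-- The regularization operator `R_L u = |Λ_L|⁻¹ ∑_{x ∈ Λ_L} τ_x u`. -/
def regularize {d : ℕ} (L : ℕ) (u : Config d → ℝ) : Config d → ℝ :=
  fun η => ((box d L).card : ℝ)⁻¹ * ∑ x ∈ box d L, transl x u η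

/-- For `f ∈ ℓ¹(K_n)` the chaos `I_n(f)(η) = ∑_{Y ∈ K_n} f(Y) η̄_Y(η)`, defined pointwise
(the series converges absolutely since `|η̄_Y| ≤ 1`). -/
def chaosFn {d n : ℕ} (ρ : ℝ) (f : Kn d n → ℝ) (η : Config d) : ℝ :=
  ∑' Y : Kn d n, f Y * etaBar ρ (Y : Finset (Zd d)) η

/-- Cauchy–Schwarz for series with weights `|a i|`. -/
lemma sq_tsum_mul_le {ι : Type*} (a u : ι → ℝ) (ha : Summable fun i => |a i|)
    (hau : Summable fun i => a i * u i) (hau2 : Summable fun i => |a i| * u i ^ 2) :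
    (∑' i, a i * u i) ^ 2 ≤ (∑' i, |a i|) * ∑' i, |a i| * u i ^ 2 := by
  refine le_of_tendsto_of_tendsto' (hau.hasSum.pow 2) (Filter.Tendsto.mul ha.hasSum hau2.hasSum) ?_
  intro s
  refine Finset.sum_sq_le_sum_mul_sum_of_sq_le_mul s (fun i _ => abs_nonneg _)
    (fun i _ => by positivity) (fun i _ => ?_)
  rw [← mul_assoc, ← sq, sq_abs, mul_pow]

lemma abs_etaBar_le_one {d : ℕ} {ρ : ℝ} (hρ : ρ ∈ Set.Ioo (0 : ℝ) 1) (Y : Finset (Zd d))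
    (η : Config d) : |etaBar ρ Y η| ≤ 1 := by
  obtain ⟨h0, h1⟩ := hρ
  rw [etaBar, Finset.abs_prod]
  refine Finset.prod_le_one (fun _ _ => abs_nonneg _) (fun x _ => ?_)
  rw [abs_le]
  split_ifs <;> constructor <;> linarith

lemma measurable_etaBar {d : ℕ} (ρ : ℝ) (Y : Finset (Zd d)) :
    Measurable (etaBar ρ Y) := by
  refine Finset.measurable_prod Y fun x _ => ?_
  exact (measurable_of_countable (fun b : Bool => (if b then (1 : ℝ) else 0) - ρ)).comp
    (measurable_pi_apply x)

lemma measurable_exchange {d : ℕ} (x y : Zd d) : Measurable (exchange x y) := by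
  refine measurable_pi_lambda _ fun z => ?_
  unfold exchange
  split_ifs <;> exact measurable_pi_apply _

/-- The second moment of `η̄_Y` is `χ(ρ)^{|Y|}`: the pushforward of `P` to the finite space
`{0,1}^Y` has product weights, so the expectation factorizes over the sites of `Y`. -/
lemma lintegral_etaBar_sq {d : ℕ} {ρ : ℝ} (hρ : ρ ∈ Set.Ioo (0 : ℝ) 1)
    {P : Measure (Config d)} (hP : IsBernoulliProduct ρ P) (Y : Finset (Zd d)) :
    ∫⁻ η, ENNReal.ofReal (etaBar ρ Y η ^ 2) ∂P = ENNReal.ofReal ((ρ * (1 - ρ)) ^ Y.card) := by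
  obtain ⟨h0, h1⟩ := hρ
  let r : Config d → (Y → Bool) := fun η x => η x
  have hr : Measurable r := measurable_pi_lambda _ fun x => measurable_pi_apply _
  let w : Bool → ℝ≥0∞ := fun b => ENNReal.ofReal (((if b then (1 : ℝ) else 0) - ρ) ^ 2)
  let p : Bool → ℝ≥0∞ := fun b => ENNReal.ofReal (if b then ρ else 1 - ρ)
  have hw : ∀ η, ENNReal.ofReal (etaBar ρ Y η ^ 2) = ∏ x : Y, w (r η x) := by
    intro η
    rw [etaBar, ← Finset.prod_pow, ENNReal.ofReal_prod_of_nonneg (fun _ _ => sq_nonneg _),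
      ← Finset.prod_coe_sort]
  have hmap : ∀ b : Y → Bool, (P.map r) {b} = ∏ x : Y, p (b x) := by
    intro b
    rw [Measure.map_apply hr (measurableSet_singleton _)]
    let b' : Zd d → Bool := fun x => if h : x ∈ Y then b ⟨x, h⟩ else false
    have hset : r ⁻¹' {b} = {η | ∀ x ∈ Y, η x = b' x} := by
      ext η
      simp only [Set.mem_preimage, Set.mem_singleton_iff, Set.mem_ofPred_eq, funext_iff, r, b']
      constructor
      · intro h x hx
        simpa [hx] using h ⟨x, hx⟩
      · rintro h ⟨x, hx⟩
        simpa [hx] using h x hx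
    rw [hset, hP.2 Y b', ← Finset.prod_coe_sort]
    refine Finset.prod_congr rfl fun x _ => ?_
    simp [b', p]
  have hcalc : p true * w true + p false * w false = ENNReal.ofReal (ρ * (1 - ρ)) := by
    simp only [p, w]
    rw [← ENNReal.ofReal_mul (by simpa using h0.le), ← ENNReal.ofReal_mul (by simpa using h1.le),
      ← ENNReal.ofReal_add]
    · congr 1
      simp
      ring
    · simp; positivity
    · have : 0 ≤ 1 - ρ := by linarith
      simp; positivity
  calc ∫⁻ η, ENNReal.ofReal (etaBar ρ Y η ^ 2) ∂P
      = ∫⁻ η, (fun b : Y → Bool => ∏ x : Y, w (b x)) (r η) ∂P := by simp only [hw]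
    _ = ∫⁻ b, ∏ x : Y, w (b x) ∂(P.map r) := by
        rw [lintegral_map (measurable_of_countable _) hr]
    _ = ∑ b : Y → Bool, ∏ x : Y, (p (b x) * w (b x)) := by
        rw [lintegral_fintype]
        refine Finset.sum_congr rfl fun b _ => ?_
        rw [hmap, Finset.prod_mul_distrib, mul_comm]
    _ = ∏ _x : Y, ∑ c : Bool, p c * w c := by
        rw [Finset.prod_univ_sum, Fintype.piFinset_univ]
    _ = ENNReal.ofReal ((ρ * (1 - ρ)) ^ Y.card) := by
        have : 0 ≤ ρ * (1 - ρ) := mul_nonneg h0.le (by linarith)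
        simp [hcalc, ENNReal.ofReal_pow this]

/-- Exchanging the coordinates `x` and `y` turns `η̄_Y` into `η̄_{Y^{x,y}}`. -/
lemma etaBar_exchange {d : ℕ} (ρ : ℝ) (x y : Zd d) (Y : Finset (Zd d)) (η : Config d) :
    etaBar ρ Y (exchange x y η) = etaBar ρ (Y.map (Equiv.swap x y).toEmbedding) η := by
  simp only [etaBar, Finset.prod_map]
  refine Finset.prod_congr rfl fun z _ => ?_
  have : exchange x y η z = η (Equiv.swap x y z) := by
    simp only [exchange, Equiv.swap_apply_def]
    split_ifs <;> rfl
  rw [this]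
  rfl

lemma kawasaki_etaBar_eq_zero {d : ℕ} (ρ : ℝ) {x y : Zd d} {Y : Finset (Zd d)} (hx : x ∉ Y)
    (hy : y ∉ Y) (η : Config d) : kawasaki x y (etaBar ρ Y) η = 0 := by
  rw [kawasaki, sub_eq_zero]
  refine Finset.prod_congr rfl fun z hz => ?_
  have h1 : z ≠ x := fun h => hx (h ▸ hz)
  have h2 : z ≠ y := fun h => hy (h ▸ hz)
  simp [exchange, h1, h2]

lemma measurable_kawasaki_etaBar {d : ℕ} (ρ : ℝ) (x y : Zd d) (Y : Finset (Zd d)) :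
    Measurable (kawasaki x y (etaBar ρ Y)) :=
  ((measurable_etaBar ρ Y).comp (measurable_exchange x y)).sub (measurable_etaBar ρ Y)

lemma lintegral_kawasaki_etaBar_sq_le {d : ℕ} {ρ : ℝ} (hρ : ρ ∈ Set.Ioo (0 : ℝ) 1)
    {P : Measure (Config d)} (hP : IsBernoulliProduct ρ P) (x y : Zd d) (Y : Finset (Zd d)) :
    ∫⁻ η, ENNReal.ofReal (kawasaki x y (etaBar ρ Y) η ^ 2) ∂P
      ≤ 4 * ENNReal.ofReal ((ρ * (1 - ρ)) ^ Y.card) := by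
  calc ∫⁻ η, ENNReal.ofReal (kawasaki x y (etaBar ρ Y) η ^ 2) ∂P
      ≤ ∫⁻ η, (2 * ENNReal.ofReal (etaBar ρ (Y.map (Equiv.swap x y).toEmbedding) η ^ 2)
          + 2 * ENNReal.ofReal (etaBar ρ Y η ^ 2)) ∂P := by
        refine lintegral_mono fun η => ?_
        have h2 : (2 : ℝ≥0∞) = ENNReal.ofReal 2 := by simp
        rw [h2, ← ENNReal.ofReal_mul (by norm_num), ← ENNReal.ofReal_mul (by norm_num),
          ← ENNReal.ofReal_add (by positivity) (by positivity), kawasaki, etaBar_exchange]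
        refine ENNReal.ofReal_le_ofReal ?_
        nlinarith [sq_nonneg (etaBar ρ (Y.map (Equiv.swap x y).toEmbedding) η + etaBar ρ Y η)]
    _ = 4 * ENNReal.ofReal ((ρ * (1 - ρ)) ^ Y.card) := by
        rw [lintegral_add_right _ (((measurable_etaBar ρ Y).pow_const 2).ennreal_ofReal.const_mul 2),
          lintegral_const_mul _ ((measurable_etaBar ρ _).pow_const 2).ennreal_ofReal,
          lintegral_const_mul _ ((measurable_etaBar ρ _).pow_const 2).ennreal_ofReal,
          lintegral_etaBar_sq hρ hP, lintegral_etaBar_sq hρ hP, Finset.card_map, ← add_mul]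
        norm_num

/-- A set `Y` of `n` sites meets at most `2dn` bonds, so `∑_b E_ρ[(π_b η̄_Y)²] ≤ 8dn χ(ρ)ⁿ`. -/
lemma tsum_lintegral_kawasaki_etaBar_sq_le {d : ℕ} {ρ : ℝ} (hρ : ρ ∈ Set.Ioo (0 : ℝ) 1)
    {P : Measure (Config d)} (hP : IsBernoulliProduct ρ P) (Y : Finset (Zd d)) :
    ∑' (x : Zd d) (i : Fin d),
        ∫⁻ η, ENNReal.ofReal (kawasaki x (x + stdBasis d i) (etaBar ρ Y) η ^ 2) ∂P
      ≤ 8 * d * Y.card * ENNReal.ofReal ((ρ * (1 - ρ)) ^ Y.card) := by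
  set c : ℝ≥0∞ := 4 * ENNReal.ofReal ((ρ * (1 - ρ)) ^ Y.card) with hc
  let g : Zd d → ℝ≥0∞ := fun x => if x ∈ Y then c else 0
  have hg : ∑' x, g x = Y.card * c := by
    rw [tsum_eq_sum (s := Y) (fun x hx => by simp [g, hx])]
    rw [Finset.sum_congr rfl (fun x hx => by simp [g, hx] : ∀ x ∈ Y, g x = c)]
    simp
  have hg' : ∀ v : Zd d, ∑' x, g (x + v) = Y.card * c := by
    intro v
    rw [← hg]
    exact (Equiv.addRight v).tsum_eq g
  have hle : ∀ (x : Zd d) (i : Fin d),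
      ∫⁻ η, ENNReal.ofReal (kawasaki x (x + stdBasis d i) (etaBar ρ Y) η ^ 2) ∂P
        ≤ g x + g (x + stdBasis d i) := by
    intro x i
    by_cases hx : x ∈ Y
    · refine (lintegral_kawasaki_etaBar_sq_le hρ hP _ _ Y).trans ?_
      simp [g, hx, ← hc]
    by_cases hy : x + stdBasis d i ∈ Y
    · refine (lintegral_kawasaki_etaBar_sq_le hρ hP _ _ Y).trans ?_
      simp [g, hy, ← hc]
    · simp [kawasaki_etaBar_eq_zero ρ hx hy]
  calc _ ≤ ∑' (x : Zd d) (i : Fin d), (g x + g (x + stdBasis d i)) :=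
        ENNReal.tsum_le_tsum fun x => ENNReal.tsum_le_tsum fun i => hle x i
    _ = ∑' (i : Fin d) (x : Zd d), (g x + g (x + stdBasis d i)) := ENNReal.tsum_comm
    _ = ∑' (_i : Fin d), (Y.card * c + Y.card * c) := by
        refine tsum_congr fun i => ?_
        rw [ENNReal.tsum_add, hg, hg']
    _ = 8 * d * Y.card * ENNReal.ofReal ((ρ * (1 - ρ)) ^ Y.card) := by
        rw [tsum_fintype, Finset.sum_const, Finset.card_univ, Fintype.card_fin, nsmul_eq_mul, hc]
        ring

lemma summable_mul_etaBar {d n : ℕ} {ρ : ℝ} (hρ : ρ ∈ Set.Ioo (0 : ℝ) 1)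
    {f : Kn d n → ℝ} (hf : Summable fun Y => |f Y|) (η : Config d) :
    Summable fun Y : Kn d n => f Y * etaBar ρ (Y : Finset (Zd d)) η := by
  refine Summable.of_norm_bounded hf fun Y => ?_
  rw [Real.norm_eq_abs, abs_mul]
  exact mul_le_of_le_one_right (abs_nonneg _) (abs_etaBar_le_one hρ _ _)

/-- The pointwise bound `(π_{x,y} F)² ≤ ‖f‖₁ ∑_Y |f(Y)| (π_{x,y} η̄_Y)²` for `F = I_n(f)`, in `[0, ∞]`
so that the series can be integrated term by term. -/
lemma ofReal_kawasaki_chaosFn_sq_le {d n : ℕ} {ρ : ℝ} (hρ : ρ ∈ Set.Ioo (0 : ℝ) 1)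
    {f : Kn d n → ℝ} (hf : Summable fun Y => |f Y|) (x y : Zd d) (η : Config d) :
    ENNReal.ofReal (kawasaki x y (chaosFn ρ f) η ^ 2)
      ≤ ENNReal.ofReal (∑' Y, |f Y|) * ∑' Y : Kn d n, ENNReal.ofReal |f Y| *
          ENNReal.ofReal (kawasaki x y (etaBar ρ (Y : Finset (Zd d))) η ^ 2) := by
  have h1 := summable_mul_etaBar hρ hf (exchange x y η)
  have h2 := summable_mul_etaBar hρ hf η
  have hk : kawasaki x y (chaosFn ρ f) η
      = ∑' Y : Kn d n, f Y * kawasaki x y (etaBar ρ (Y : Finset (Zd d))) η := by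
    simp only [kawasaki, chaosFn, mul_sub]
    exact (h1.tsum_sub h2).symm
  have hs : Summable fun Y : Kn d n => f Y * kawasaki x y (etaBar ρ (Y : Finset (Zd d))) η := by
    simpa only [kawasaki, mul_sub] using h1.sub h2
  have hs2 : Summable fun Y : Kn d n =>
      |f Y| * kawasaki x y (etaBar ρ (Y : Finset (Zd d))) η ^ 2 := by
    refine Summable.of_nonneg_of_le (fun Y => by positivity) (fun Y => ?_) (hf.mul_right 4)
    refine mul_le_mul_of_nonneg_left ?_ (abs_nonneg _)
    have ha := abs_le.1 (abs_etaBar_le_one hρ (Y : Finset (Zd d)) (exchange x y η))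
    have hb := abs_le.1 (abs_etaBar_le_one hρ (Y : Finset (Zd d)) η)
    rw [kawasaki]
    nlinarith
  rw [hk]
  refine (ENNReal.ofReal_le_ofReal (sq_tsum_mul_le _ _ hf hs hs2)).trans ?_
  rw [ENNReal.ofReal_mul (tsum_nonneg fun _ => abs_nonneg _),
    ENNReal.ofReal_tsum_of_nonneg (fun _ => by positivity) hs2]
  simp only [ENNReal.ofReal_mul (abs_nonneg _), le_refl]

/-- For `F := I_n(f)` with `f ∈ ℓ¹(K_n)`, the Dirichlet form of the
simple symmetric exclusion process satisfies
`Ē_ρ(F) = ½ ∑_{b ∈ (ℤ^d)^*} E_ρ[(π_b F)²] ≤ 8 d n χ(ρ)^n |||F|||_n²`, where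
`|||F|||_n = ‖f‖_{ℓ¹(K_n)}`. (Each bond `b ∈ (ℤ^d)^*` is written uniquely as
`{x, x + e_i}` with `x ∈ ℤ^d`, `1 ≤ i ≤ d`; both sides are read in `[0, ∞]`.) -/
theorem stmt10 (d n : ℕ) (hd : 1 ≤ d) (hn : 1 ≤ n) (ρ : ℝ) (hρ : ρ ∈ Set.Ioo (0 : ℝ) 1)
    (P : Measure (Config d)) (hP : IsBernoulliProduct ρ P)
    (f : Kn d n → ℝ) (hf : Summable fun Y => |f Y|) :
    (1 / 2 : ℝ≥0∞) * ∑' (x : Zd d) (i : Fin d),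
        ∫⁻ η, ENNReal.ofReal ((kawasaki x (x + stdBasis d i) (chaosFn ρ f) η) ^ 2) ∂P
      ≤ ENNReal.ofReal
          (8 * d * n * (ρ * (1 - ρ)) ^ n * (∑' Y : Kn d n, |f Y|) ^ 2) := by
  have hχ : 0 ≤ ρ * (1 - ρ) := mul_nonneg hρ.1.le (by linarith [hρ.2])
  set S : ℝ := ∑' Y : Kn d n, |f Y| with hS
  have hS0 : 0 ≤ S := tsum_nonneg fun _ => abs_nonneg _
  have hb : ∀ (x : Zd d) (i : Fin d),
      ∫⁻ η, ENNReal.ofReal ((kawasaki x (x + stdBasis d i) (chaosFn ρ f) η) ^ 2) ∂P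
        ≤ ENNReal.ofReal S * ∑' Y : Kn d n, ENNReal.ofReal |f Y| *
          ∫⁻ η, ENNReal.ofReal
            (kawasaki x (x + stdBasis d i) (etaBar ρ (Y : Finset (Zd d))) η ^ 2) ∂P := by
    intro x i
    have hm : ∀ Y : Finset (Zd d), Measurable fun η => ENNReal.ofReal
        (kawasaki x (x + stdBasis d i) (etaBar ρ Y) η ^ 2) := fun Y =>
      ((measurable_kawasaki_etaBar ρ x (x + stdBasis d i) Y).pow_const 2).ennreal_ofReal
    refine (lintegral_mono fun η => ofReal_kawasaki_chaosFn_sq_le hρ hf x _ η).trans ?_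
    rw [lintegral_const_mul' _ _ ENNReal.ofReal_ne_top,
      lintegral_tsum fun Y : Kn d n => ((hm Y).const_mul _).aemeasurable]
    simp only [lintegral_const_mul' _ _ ENNReal.ofReal_ne_top, le_refl, hS]
  have hsum : ∑' (x : Zd d) (i : Fin d),
        ∫⁻ η, ENNReal.ofReal ((kawasaki x (x + stdBasis d i) (chaosFn ρ f) η) ^ 2) ∂P
      ≤ ENNReal.ofReal (8 * d * n * (ρ * (1 - ρ)) ^ n * S ^ 2) := by
    calc _ ≤ ∑' (x : Zd d) (i : Fin d), ENNReal.ofReal S * ∑' Y : Kn d n, ENNReal.ofReal |f Y| *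
          ∫⁻ η, ENNReal.ofReal
            (kawasaki x (x + stdBasis d i) (etaBar ρ (Y : Finset (Zd d))) η ^ 2) ∂P :=
          ENNReal.tsum_le_tsum fun x => ENNReal.tsum_le_tsum fun i => hb x i
      _ = ENNReal.ofReal S * ∑' Y : Kn d n, ENNReal.ofReal |f Y| * ∑' (x : Zd d) (i : Fin d),
          ∫⁻ η, ENNReal.ofReal
            (kawasaki x (x + stdBasis d i) (etaBar ρ (Y : Finset (Zd d))) η ^ 2) ∂P := by
          simp only [← ENNReal.tsum_mul_left]
          rw [ENNReal.tsum_comm (α := Kn d n)]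
          exact tsum_congr fun x => ENNReal.tsum_comm
      _ ≤ ENNReal.ofReal S * ∑' Y : Kn d n, ENNReal.ofReal |f Y| *
          (8 * d * n * ENNReal.ofReal ((ρ * (1 - ρ)) ^ n)) := by
          gcongr with Y
          have := tsum_lintegral_kawasaki_etaBar_sq_le hρ hP (Y : Finset (Zd d))
          rwa [Y.2] at this
      _ = ENNReal.ofReal (8 * d * n * (ρ * (1 - ρ)) ^ n * S ^ 2) := by
          rw [ENNReal.tsum_mul_right, ← ENNReal.ofReal_tsum_of_nonneg (fun _ => abs_nonneg _) hf,
            ← hS]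
          have h8 : (8 * d * n : ℝ≥0∞) = ENNReal.ofReal (8 * d * n) := by
            rw [ENNReal.ofReal_mul (by positivity), ENNReal.ofReal_mul (by positivity)]
            simp
          rw [h8, ← ENNReal.ofReal_mul (by positivity), ← ENNReal.ofReal_mul hS0,
            ← ENNReal.ofReal_mul hS0]
          congr 1
          ring
  refine le_trans ?_ hsum
  refine mul_le_of_le_one_left zero_le ?_
  simp

end
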